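/- arXiv:2402.05555 — 4 statements merged into one kernel-verified Lean document; each statement's English description precedes it below -/
import Mathlib

section
/- Let K be a field, S = K[x_1,…,x_n], 𝔪 = (x_1,…,x_n), let A ⊆ ℕⁿ be a finite nonempty set of exponent vectors, and let I = (x^a : a ∈ A). Suppose there exists an index i ∈ {1,…,n} such that a_i = 0 for every a ∈ A (i.e. the variable x_i divides no generator of I). Then for every integer k ≥ 0, (I𝔪^{k+1} : 𝔪) = I𝔪^{k}; that is, I𝔪^k is weakly 𝔪-full for all k ≥ 0. -/
/-!
Write `𝔪 = 𝔫 + (x_i)`, with `𝔫` generated by the other variables. Then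
`𝔪^{k+1} = 𝔫^{k+1} + x_i 𝔪^k`, so `I𝔪^{k+1} = I𝔫^{k+1} + x_i I𝔪^k`, where `I𝔫^{k+1}` is generated
by polynomials free of `x_i`. Division by `x_i`, discarding the terms not divisible by `x_i`, is
linear over the polynomials free of `x_i`, so it maps `I𝔫^{k+1}` into itself. Applying it to
`x_i f ∈ I𝔪^{k+1}` gives `f ∈ I𝔫^{k+1} + I𝔪^k = I𝔪^k`.
-/

open MvPolynomial
open scoped Pointwise

theorem add_pow_succ_eq_pow_add_mul_pow {α : Type*} [IdemCommSemiring α] (a b : α) (k : ℕ) :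
    (a + b) ^ (k + 1) = a ^ (k + 1) + b * (a + b) ^ k := by
  induction k with
  | zero => simp only [zero_add, pow_one, pow_zero, mul_one]
  | succ k ih =>
    have absorb : a * (b * (a + b) ^ k) + b * (a + b) ^ (k + 1) = b * (a + b) ^ (k + 1) :=
      calc
        _ = b * ((a + a) * (a + b) ^ k + b * (a + b) ^ k) := by ring
        _ = b * (a + b) ^ (k + 1) := by rw [add_idem, ← add_mul, pow_succ']
    calc
      (a + b) ^ (k + 2) = a * (a + b) ^ (k + 1) + b * (a + b) ^ (k + 1) := by ring
      _ = a * (a ^ (k + 1) + b * (a + b) ^ k) + b * (a + b) ^ (k + 1) := by rw [← ih]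
      _ = a ^ (k + 2) + b * (a + b) ^ (k + 1) := by
        rw [mul_add, ← pow_succ', add_assoc, absorb]

theorem span_mul_span_pow {A : Type*} [CommSemiring A] (T U : Set A) (k : ℕ) :
    Ideal.span T * Ideal.span U ^ k = Ideal.span (T * U ^ k) := by
  rw [← Ideal.span_mul_span']
  exact congrArg (Ideal.span T * ·) (Submodule.span_pow U k)

theorem mul_pow_le_colon_mul_pow_succ {A : Type*} [CommSemiring A] (I : Ideal A) {𝔪 : Ideal A}
    {S : Set A} (hS : S ⊆ 𝔪) (k : ℕ) : I * 𝔪 ^ k ≤ (I * 𝔪 ^ (k + 1)).colon S := by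
  intro f hf
  refine Submodule.mem_colon.mpr fun p hp ↦ ?_
  rw [pow_succ, ← mul_assoc]
  exact Ideal.mul_mem_mul hf (hS hp)

section MonomialDivision

variable {σ R : Type*} [CommSemiring R] {s : σ →₀ ℕ}

theorem X_mul_divMonomial_of_notMem_support {j : σ} (hj : j ∉ s.support)
    (p : MvPolynomial σ R) : (X j * p).divMonomial s = X j * p.divMonomial s := by
  classical
  ext u
  have hsj : s j = 0 := Finsupp.notMem_support_iff.mp hj
  simp only [coeff_divMonomial, coeff_X_mul', Finsupp.mem_support_iff, Finsupp.add_apply, hsj,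
    zero_add]
  refine ite_congr rfl (fun huj ↦ ?_) fun _ ↦ rfl
  rw [add_tsub_assoc_of_le (Finsupp.single_le_iff.mpr (Nat.one_le_iff_ne_zero.mpr huj))]

theorem mul_divMonomial_of_mem_supported {p : MvPolynomial σ R}
    (hp : p ∈ supported R (s.support : Set σ)ᶜ) (q : MvPolynomial σ R) :
    (p * q).divMonomial s = p * q.divMonomial s := by
  induction hp using Algebra.adjoin_induction generalizing q with
  | mem _ hx =>
    obtain ⟨j, hj, rfl⟩ := hx
    exact X_mul_divMonomial_of_notMem_support hj q
  | algebraMap r => ext u; simp only [algebraMap_eq, coeff_divMonomial, coeff_C_mul]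
  | add p₁ p₂ _ _ h₁ h₂ => rw [add_mul, add_divMonomial, h₁, h₂, add_mul]
  | mul p₁ p₂ _ _ h₁ h₂ => rw [mul_assoc, h₁, h₂, mul_assoc]

theorem divMonomial_mem_span {T : Set (MvPolynomial σ R)}
    (hT : T ⊆ supported R (s.support : Set σ)ᶜ) {f : MvPolynomial σ R}
    (hf : f ∈ Ideal.span T) : f.divMonomial s ∈ Ideal.span T := by
  induction hf using Submodule.closure_induction with
  | zero => rw [zero_divMonomial]; exact zero_mem _
  | add f g _ _ hf hg => rw [add_divMonomial]; exact add_mem hf hg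
  | smul_mem q t ht =>
    rw [smul_eq_mul, mul_comm, mul_divMonomial_of_mem_supported (hT ht)]
    exact Ideal.mul_mem_right _ _ (Ideal.subset_span ht)

theorem mul_sup_pow_succ_colon_monomial {T U : Set (MvPolynomial σ R)}
    (hT : T ⊆ supported R (s.support : Set σ)ᶜ) (hU : U ⊆ supported R (s.support : Set σ)ᶜ)
    (k : ℕ) :
    (Ideal.span T * (Ideal.span U ⊔ Ideal.span {monomial s 1}) ^ (k + 1)).colon {monomial s 1} =
      Ideal.span T * (Ideal.span U ⊔ Ideal.span {monomial s 1}) ^ k := by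
  set 𝔪 : Ideal (MvPolynomial σ R) := Ideal.span U ⊔ Ideal.span {monomial s 1}
  have decomposition : Ideal.span T * 𝔪 ^ (k + 1) =
      Ideal.span (T * U ^ (k + 1)) ⊔ Ideal.span {monomial s 1} * (Ideal.span T * 𝔪 ^ k) := by
    rw [← span_mul_span_pow, mul_left_comm, ← Ideal.mul_sup]
    exact congrArg (Ideal.span T * ·) (add_pow_succ_eq_pow_add_mul_pow _ _ k)
  have generators_supported : T * U ^ (k + 1) ⊆ supported R (s.support : Set σ)ᶜ :=
    Submonoid.mul_subset (S := (supported R (s.support : Set σ)ᶜ).toSubmonoid) hT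
      (Submonoid.pow_subset hU)
  have span_le : Ideal.span (T * U ^ (k + 1)) ≤ Ideal.span T * 𝔪 ^ k := by
    rw [← span_mul_span_pow]
    exact Ideal.mul_mono_right ((Ideal.pow_right_mono le_sup_left _).trans
      (Ideal.pow_le_pow_right k.le_succ))
  refine le_antisymm (fun f hf ↦ ?_) (mul_pow_le_colon_mul_pow_succ _ ?_ k)
  · rw [Submodule.mem_colon_singleton, smul_eq_mul, decomposition] at hf
    obtain ⟨g, hg, _, hmul, hsum⟩ := Submodule.mem_sup.mp hf
    obtain ⟨h, hh, rfl⟩ := Ideal.mem_span_singleton_mul.mp hmul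
    have f_eq : f = g.divMonomial s + h := by
      rw [← divMonomial_mul_monomial s f, ← hsum, add_divMonomial, divMonomial_monomial_mul]
    rw [f_eq]
    exact add_mem (span_le (divMonomial_mem_span generators_supported hg)) hh
  · exact Set.singleton_subset_iff.mpr
      (Ideal.mem_sup_right (Ideal.mem_span_singleton_self _))

theorem span_range_X_eq_sup (i : σ) :
    Ideal.span (Set.range (X : σ → MvPolynomial σ R)) =
      Ideal.span (X '' {i}ᶜ) ⊔ Ideal.span {X i} := by
  rw [← Ideal.span_union, ← Set.image_singleton, ← Set.image_union, Set.compl_union_self,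
    Set.image_univ]

theorem monomial_mem_supported {S : Set σ} {a : σ →₀ ℕ} (ha : (a.support : Set σ) ⊆ S) (r : R) :
    monomial a r ∈ supported R S := by
  rcases eq_or_ne r 0 with rfl | hr
  · rw [monomial_zero]
    exact zero_mem _
  · rwa [mem_supported, vars_monomial hr]

end MonomialDivision

theorem stmt_4_general {σ R : Type*} [CommSemiring R] {i : σ} {T : Set (MvPolynomial σ R)}
    (hT : T ⊆ supported R {i}ᶜ) (k : ℕ) :
    (Ideal.span T * Ideal.span (Set.range X) ^ (k + 1)).colon
        (Ideal.span (Set.range X) : Ideal (MvPolynomial σ R)) =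
      Ideal.span T * Ideal.span (Set.range X) ^ k := by
  have support_single : ((Finsupp.single i 1).support : Set σ) = {i} := by
    rw [Finsupp.support_single i one_ne_zero, Finset.coe_singleton]
  have colon_X : (Ideal.span T * Ideal.span (Set.range X) ^ (k + 1)).colon {X i} =
      Ideal.span T * Ideal.span (Set.range X) ^ k := by
    rw [span_range_X_eq_sup i]
    exact mul_sup_pow_succ_colon_monomial (s := Finsupp.single i 1)
      (by rwa [support_single]) (by rw [support_single]; exact Algebra.subset_adjoin) k
  have X_mem : X i ∈ (Ideal.span (Set.range X) : Ideal (MvPolynomial σ R)) :=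
    Ideal.subset_span (Set.mem_range_self i)
  exact le_antisymm
    ((Submodule.colon_mono le_rfl (Set.singleton_subset_iff.mpr X_mem)).trans_eq colon_X)
    (mul_pow_le_colon_mul_pow_succ _ subset_rfl k)

/-- If some variable `x_i` divides no generator of the monomial ideal
`I = (x^a : a ∈ A)`, then `(I𝔪^{k+1} : 𝔪) = I𝔪^k` for every `k ≥ 0`. -/
theorem stmt_4 (K : Type*) [Field K] (n : ℕ) (A : Finset (Fin n →₀ ℕ))
    (hAne : A.Nonempty)
    (m I : Ideal (MvPolynomial (Fin n) K))
    (hm : m = Ideal.span (Set.range (MvPolynomial.X : Fin n → MvPolynomial (Fin n) K)))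
    (hI : I = Ideal.span ((fun a : Fin n →₀ ℕ => MvPolynomial.monomial a (1 : K)) '' A))
    (i : Fin n) (hi : ∀ a ∈ A, a i = 0)
    (k : ℕ) :
    (I * m ^ (k + 1)).colon m = I * m ^ k := by
  subst hm hI
  refine stmt_4_general (i := i) ?_ k
  rintro _ ⟨a, ha, rfl⟩
  exact monomial_mem_supported (Set.subset_compl_singleton_iff.mpr (by simp [hi a ha])) 1
end

section
/- Let K be a field, n ≥ 1, S = K[x_1,…,x_n], 𝔪 = (x_1,…,x_n), and let I = (x_1^{a_1},…,x_n^{a_n}) be the monomial complete intersection generated by the pure powers x_i^{a_i}, where 1 ≤ a_1 ≤ a_2 ≤ … ≤ a_n. Then for every integer k ≥ Σ_{i=1}^{n−1} a_i − (n−1), the ideal I𝔪^k is weakly 𝔪-full, i.e. (I𝔪^{k+1} : 𝔪) = I𝔪^{k}. -/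
/-!
Both `I𝔪^k` and `(I𝔪^(k+1) : 𝔪)` are cut out by conditions on exponents: `x^u ∈ I𝔪^k` iff some
`i` has `a i ≤ u i` and `a i + k ≤ deg u`, and `x^u ∈ (I𝔪^(k+1) : 𝔪)` iff every `x^u x_l`
satisfies this condition for `k + 1`. If `x^u` lies in the second ideal but not in the first, then
the condition on `x^u x_l` can only be met at `i = l`, so `u` is the exponent `(a l - 1)_l` of the
socle of `S/I`, and `a l + k ≤ deg u` for every `l`. For a single index `j` this says
`k < ∑_{i ≠ j} (a i - 1)`, which the bound on `k` excludes when `j` is the last index.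
-/

section WeaklyFull

variable {A : Type*} [CommSemiring A]

/-- An ideal `J` is weakly `𝔪`-full if `(J𝔪 : 𝔪) = J`; here `𝔪` may be any ideal. -/
def IsWeaklyFull (𝔪 J : Ideal A) : Prop :=
  (J * 𝔪).colon (𝔪 : Set A) = J

theorem isWeaklyFull_iff_colon_le {𝔪 J : Ideal A} :
    IsWeaklyFull 𝔪 J ↔ (J * 𝔪).colon (𝔪 : Set A) ≤ J :=
  ⟨le_of_eq, fun h => h.antisymm fun _ hp =>
    Submodule.mem_colon.2 fun _ hq => Ideal.mul_mem_mul hp hq⟩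

end WeaklyFull

section MonomialIdeal

open MvPolynomial
open scoped Pointwise

variable {σ R : Type*} [CommSemiring R]

theorem span_monomial_mul_span_monomial (s t : Set (σ →₀ ℕ)) :
    Ideal.span ((monomial · (1 : R)) '' s) * Ideal.span ((monomial · (1 : R)) '' t) =
      Ideal.span ((monomial · (1 : R)) '' (s + t)) := by
  rw [Ideal.span_mul_span', ← Set.image2_mul, Set.image2_image_left, Set.image2_image_right,
    ← Set.image2_add, Set.image_image2]
  simp only [monomial_mul, one_mul]

theorem exists_add_le_iff_degree_add_le {u v : σ →₀ ℕ} {k : ℕ} :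
    (∃ w : σ →₀ ℕ, w.degree = k ∧ v + w ≤ u) ↔ v ≤ u ∧ v.degree + k ≤ u.degree := by
  constructor
  · rintro ⟨w, rfl, hle⟩
    exact ⟨le_self_add.trans hle, map_add Finsupp.degree v w ▸ Finsupp.degree_mono hle⟩
  · rintro ⟨hle, hdeg⟩
    obtain ⟨d, rfl⟩ := exists_add_of_le hle
    rw [map_add, add_le_add_iff_left] at hdeg
    obtain ⟨w, hwd, hw⟩ := Finsupp.exists_le_degree_eq d k hdeg
    exact ⟨w, hw, add_le_add_right hwd v⟩

theorem mem_span_monomial_mul_pow_idealOfVars_iff {s : Set (σ →₀ ℕ)} {k : ℕ}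
    {p : MvPolynomial σ R} :
    p ∈ Ideal.span ((monomial · (1 : R)) '' s) * idealOfVars σ R ^ k ↔
      ∀ u ∈ p.support, ∃ v ∈ s, v ≤ u ∧ v.degree + k ≤ u.degree := by
  rw [pow_idealOfVars_eq_span, span_monomial_mul_span_monomial, mem_ideal_span_monomial_image]
  simp only [← exists_add_le_iff_degree_add_le, Set.mem_add, Set.mem_preimage,
    Set.mem_singleton_iff]
  grind

theorem mem_colon_idealOfVars_iff {J : Ideal (MvPolynomial σ R)} {p : MvPolynomial σ R} :
    p ∈ J.colon (idealOfVars σ R : Set (MvPolynomial σ R)) ↔ ∀ l, p * X l ∈ J := by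
  rw [Ideal.colon_span, Submodule.mem_colon, Set.forall_mem_range]
  rfl

end MonomialIdeal

section PurePowerIdeal

open MvPolynomial Finset

variable {σ : Type*}

/-- The monomial complete intersection `(x_i ^ a_i)_i` generated by pure powers of the variables. -/
noncomputable def purePowerIdeal (R : Type*) [CommSemiring R] (a : σ → ℕ) :
    Ideal (MvPolynomial σ R) :=
  Ideal.span (Set.range fun i => X i ^ a i)

theorem mem_purePowerIdeal_mul_pow_idealOfVars_iff {R : Type*} [CommSemiring R] {a : σ → ℕ}
    {k : ℕ} {p : MvPolynomial σ R} :
    p ∈ purePowerIdeal R a * idealOfVars σ R ^ k ↔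
      ∀ u ∈ p.support, ∃ i, a i ≤ u i ∧ a i + k ≤ u.degree := by
  have span_eq : purePowerIdeal R a =
      Ideal.span ((monomial · (1 : R)) '' Set.range fun i => Finsupp.single i (a i)) := by
    rw [purePowerIdeal, ← Set.range_comp]
    simp only [X_pow_eq_monomial, Function.comp_def]
  rw [span_eq, mem_span_monomial_mul_pow_idealOfVars_iff]
  simp only [Set.exists_range_iff, Finsupp.single_le_iff, Finsupp.degree_single]

theorem exists_le_apply_of_mem_colon {R : Type*} [CommSemiring R] {a : σ → ℕ} {k : ℕ}
    {p : MvPolynomial σ R} {u : σ →₀ ℕ}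
    (hp : p ∈ (purePowerIdeal R a * idealOfVars σ R ^ (k + 1)).colon
      (idealOfVars σ R : Set (MvPolynomial σ R)))
    (hu : u ∈ p.support) (l : σ) :
    ∃ i, a i ≤ (u + Finsupp.single l 1 : σ →₀ ℕ) i ∧ a i + k ≤ u.degree := by
  have hul : u + Finsupp.single l 1 ∈ (p * X l).support := by
    rwa [mem_support_iff, coeff_mul_X, ← mem_support_iff]
  obtain ⟨i, hi, hdeg⟩ :=
    mem_purePowerIdeal_mul_pow_idealOfVars_iff.1 (mem_colon_idealOfVars_iff.1 hp l) _ hul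
  rw [map_add, Finsupp.degree_single, ← add_assoc, add_le_add_iff_right] at hdeg
  exact ⟨i, hi, hdeg⟩

theorem apply_add_one_eq_of_forall_not_le {a : σ → ℕ} {k : ℕ} {u : σ →₀ ℕ}
    (hu : ¬ ∃ i, a i ≤ u i ∧ a i + k ≤ u.degree) {l : σ}
    (hl : ∃ i, a i ≤ (u + Finsupp.single l 1 : σ →₀ ℕ) i ∧ a i + k ≤ u.degree) :
    u l + 1 = a l ∧ a l + k ≤ u.degree := by
  obtain ⟨i, hi, hdeg⟩ := hl
  have hlt : u i < a i := not_le.1 fun hle => hu ⟨i, hle, hdeg⟩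
  obtain rfl | hne := eq_or_ne i l
  · rw [Finsupp.add_apply, Finsupp.single_eq_same] at hi
    exact ⟨le_antisymm hlt hi, hdeg⟩
  · rw [Finsupp.add_apply, Finsupp.single_eq_of_ne hne, add_zero] at hi
    exact absurd hi hlt.not_ge

theorem lt_sum_compl_of_apply_add_one_eq [Fintype σ] [DecidableEq σ] {a : σ → ℕ} {k : ℕ}
    {u : σ →₀ ℕ} (hu : ∀ i, u i + 1 = a i) {j : σ} (hj : a j + k ≤ u.degree) :
    k + #({j}ᶜ : Finset σ) < ∑ i ∈ {j}ᶜ, a i := by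
  have hsum : ∑ i ∈ {j}ᶜ, a i = ∑ i ∈ {j}ᶜ, u i + #({j}ᶜ : Finset σ) := by
    simp only [← hu, sum_add_distrib, sum_const, smul_eq_mul, mul_one]
  rw [Finsupp.degree_eq_sum, Fintype.sum_eq_add_sum_compl j, ← hu j] at hj
  omega

theorem stmt_5_general [Fintype σ] [DecidableEq σ] (R : Type*) [CommSemiring R] (a : σ → ℕ)
    (k : ℕ) (j : σ) (hk : ∑ i ∈ {j}ᶜ, a i ≤ k + #({j}ᶜ : Finset σ)) :
    IsWeaklyFull (idealOfVars σ R) (purePowerIdeal R a * idealOfVars σ R ^ k) := by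
  rw [isWeaklyFull_iff_colon_le, mul_assoc, ← pow_succ]
  intro p hp
  rw [mem_purePowerIdeal_mul_pow_idealOfVars_iff]
  intro u hu
  by_contra hnot
  have socle (l : σ) : u l + 1 = a l ∧ a l + k ≤ u.degree :=
    apply_add_one_eq_of_forall_not_le hnot (exists_le_apply_of_mem_colon hp hu l)
  exact hk.not_gt (lt_sum_compl_of_apply_add_one_eq (fun l => (socle l).1) (socle j).2)

end PurePowerIdeal

theorem filter_val_lt_sub_one_eq_compl_singleton {n : ℕ} (hn : n - 1 < n) :
    Finset.univ.filter (fun i : Fin n => (i : ℕ) < n - 1) = {⟨n - 1, hn⟩}ᶜ := by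
  ext i
  simp only [Finset.mem_filter_univ, Finset.mem_compl, Finset.mem_singleton, Fin.ext_iff]
  omega

/-- For a monomial complete intersection `I = (x_1^{a_1},…,x_n^{a_n})` of pure powers
with `1 ≤ a_1 ≤ … ≤ a_n`, for every `k ≥ Σ_{i=1}^{n-1} a_i − (n−1)` the ideal
`I𝔪^k` is weakly `𝔪`-full: `(I𝔪^{k+1} : 𝔪) = I𝔪^k`. -/
theorem stmt_5 (K : Type*) [Field K] (n : ℕ) (hn : 1 ≤ n)
    (a : Fin n → ℕ) (ha1 : ∀ i, 1 ≤ a i) (hmono : Monotone a)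
    (m I : Ideal (MvPolynomial (Fin n) K))
    (hm : m = Ideal.span (Set.range (MvPolynomial.X : Fin n → MvPolynomial (Fin n) K)))
    (hI : I = Ideal.span (Set.range fun i : Fin n => (MvPolynomial.X i : MvPolynomial (Fin n) K) ^ a i))
    (k : ℕ)
    (hk : (∑ i ∈ Finset.univ.filter (fun i : Fin n => (i : ℕ) < n - 1), a i) - (n - 1) ≤ k) :
    (I * m ^ (k + 1)).colon m = I * m ^ k := by
  subst hm hI
  have last_lt : n - 1 < n := Nat.sub_one_lt_of_lt hn
  rw [filter_val_lt_sub_one_eq_compl_singleton last_lt, Nat.sub_le_iff_le_add] at hk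
  rw [pow_succ, ← mul_assoc]
  exact stmt_5_general K a k ⟨n - 1, last_lt⟩ (by simpa [Finset.card_compl] using hk)
end

section
/- Let K be a field, S = K[x_1,…,x_n], 𝔪 = (x_1,…,x_n), let A ⊆ ℕⁿ be a finite nonempty set of exponent vectors with pairwise disjoint supports (so I = (x^a : a ∈ A) is a monomial complete intersection), such that the union of the supports is all of {1,…,n}, and such that some a ∈ A has at least two nonzero entries (i.e. some minimal generator is not a pure power of a variable). Then for every integer k ≥ 0, (I𝔪^{k+1} : 𝔪) = I𝔪^{k}; that is, I𝔪^k is weakly 𝔪-full for all k ≥ 0. -/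
/-!
A monomial `x^u` lies in `I𝔪^k` iff some generator `x^a` of `I` divides it with `|a| + k ≤ |u|`.
Passing from `(x^u, k)` to `(x_i x^u, k + 1)` preserves the degree condition, so only divisibility
matters. Let `x_i ≠ x_j` be two variables of the non-pure generator `x^a`, and let `x_i x^u` and
`x_j x^u` be divisible by generators `x^b` and `x^c`. If `b ≠ a`, then `x_i` does not occur in
`x^b`, so `x^b` already divides `x^u`; likewise for `c`. If `b = c = a`, then `x^a` divides
`gcd(x_i x^u, x_j x^u) = x^u`.
-/

section Finsupp

open Finsupp

variable {σ M : Type*}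

theorem le_of_le_add_single_of_apply_le [AddZeroClass M] [LE M] {b u : σ →₀ M} {i : σ} {c : M}
    (h : b ≤ u + single i c) (hi : b i ≤ u i) : b ≤ u := by
  intro j
  obtain rfl | hj := eq_or_ne j i
  · exact hi
  · simpa [single_eq_of_ne hj] using h j

theorem exists_mem_le_of_forall_exists_mem_le_add_single [AddCommMonoid M] [PartialOrder M]
    [CanonicallyOrderedAdd M] {A : Set (σ →₀ M)} {a u : σ →₀ M} {s : Finset σ} {c : M}
    (hs : s.Nontrivial) (hA : ∀ b ∈ A, b ≠ a → Disjoint s b.support)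
    (hu : ∀ i ∈ s, ∃ b ∈ A, b ≤ u + single i c) : ∃ b ∈ A, b ≤ u := by
  have le_of_ne {i : σ} (hi : i ∈ s) {b : σ →₀ M} (hb : b ∈ A) (hbu : b ≤ u + single i c)
      (hba : b ≠ a) : b ≤ u := by
    have hbi : b i = 0 := notMem_support_iff.1 (Finset.disjoint_left.1 (hA b hb hba) hi)
    exact le_of_le_add_single_of_apply_le hbu (hbi ▸ zero_le)
  obtain ⟨i, hi, j, hj, hij⟩ := hs
  obtain ⟨b, hb, hbu⟩ := hu i hi
  obtain ⟨b', hb', hbu'⟩ := hu j hj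
  by_cases hba : b = a
  · by_cases hba' : b' = a
    · have hbi : b i ≤ u i := by simpa [hba, hba', single_eq_of_ne hij] using hbu' i
      exact ⟨b, hb, le_of_le_add_single_of_apply_le hbu hbi⟩
    · exact ⟨b', hb', le_of_ne hj hb' hbu' hba'⟩
  · exact ⟨b, hb, le_of_ne hi hb hbu hba⟩

end Finsupp

theorem le_colon_mul {R : Type*} [CommSemiring R] (I J : Ideal R) : J ≤ (J * I).colon I :=
  fun _ hp => Submodule.mem_colon.2 fun _ hq => Ideal.mul_mem_mul hp hq

section MvPolynomial

open MvPolynomial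
open scoped Pointwise

variable {σ R : Type*} [CommSemiring R]

theorem span_monomial_image_mul_span_monomial_image (A B : Set (σ →₀ ℕ)) :
    Ideal.span ((monomial · (1 : R)) '' A) * Ideal.span ((monomial · (1 : R)) '' B) =
      Ideal.span ((monomial · (1 : R)) '' (A + B)) := by
  rw [Ideal.span_mul_span']
  congr 1
  exact (Set.image_image2_distrib fun a b => by simp [monomial_mul]).symm

theorem idealOfVars_pow_eq_span_monomial_image (k : ℕ) :
    idealOfVars σ R ^ k = Ideal.span ((monomial · (1 : R)) '' {c | k ≤ c.degree}) := by
  ext p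
  rw [mem_pow_idealOfVars_iff, mem_ideal_span_monomial_image]
  exact forall₂_congr fun u _ =>
    ⟨fun hu => ⟨u, hu, le_rfl⟩, fun ⟨_, hc, hcu⟩ => hc.trans (Finsupp.degree_mono hcu)⟩

theorem mem_span_monomial_image_mul_idealOfVars_pow_iff {A : Set (σ →₀ ℕ)} {k : ℕ}
    {p : MvPolynomial σ R} :
    p ∈ Ideal.span ((monomial · (1 : R)) '' A) * idealOfVars σ R ^ k ↔
      ∀ u ∈ p.support, ∃ a ∈ A, a ≤ u ∧ a.degree + k ≤ u.degree := by
  rw [idealOfVars_pow_eq_span_monomial_image, span_monomial_image_mul_span_monomial_image,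
    mem_ideal_span_monomial_image]
  refine forall₂_congr fun u _ => ⟨?_, ?_⟩
  · rintro ⟨_, ⟨a, ha, c, hc, rfl⟩, hu⟩
    refine ⟨a, ha, le_self_add.trans hu, ?_⟩
    calc a.degree + k ≤ a.degree + c.degree := Nat.add_le_add_left hc _
      _ = (a + c).degree := (map_add _ _ _).symm
      _ ≤ u.degree := Finsupp.degree_mono hu
  · rintro ⟨a, ha, hau, hdeg⟩
    obtain ⟨c, rfl⟩ := le_iff_exists_add.1 hau
    have hc : k ≤ c.degree := by simpa using hdeg
    exact ⟨a + c, Set.add_mem_add ha hc, le_rfl⟩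

theorem colon_X_image_le_of_disjoint_support {A : Set (σ →₀ ℕ)} {a : σ →₀ ℕ} {s : Finset σ}
    (hs : s.Nontrivial) (hA : ∀ b ∈ A, b ≠ a → Disjoint s b.support) (k : ℕ) :
    (Ideal.span ((monomial · (1 : R)) '' A) * idealOfVars σ R ^ (k + 1)).colon (X '' s) ≤
      Ideal.span ((monomial · (1 : R)) '' A) * idealOfVars σ R ^ k := by
  intro p hp
  rw [mem_span_monomial_image_mul_idealOfVars_pow_iff]
  intro u hu
  have exists_le_add_single : ∀ i ∈ s, ∃ b ∈ {b ∈ A | b.degree + k ≤ u.degree},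
      b ≤ u + Finsupp.single i 1 := by
    intro i hi
    have hpX := Submodule.mem_colon.1 hp (X i) (Set.mem_image_of_mem X hi)
    have huX : u + Finsupp.single i 1 ∈ (p * X i).support := by
      rwa [mem_support_iff, coeff_mul_X, ← mem_support_iff]
    obtain ⟨b, hb, hbu, hdeg⟩ := mem_span_monomial_image_mul_idealOfVars_pow_iff.1 hpX _ huX
    rw [map_add, Finsupp.degree_single, ← add_assoc] at hdeg
    exact ⟨b, ⟨hb, Nat.le_of_add_le_add_right hdeg⟩, hbu⟩
  obtain ⟨b, ⟨hb, hdeg⟩, hbu⟩ := exists_mem_le_of_forall_exists_mem_le_add_single hs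
    (fun b hb => hA b hb.1) exists_le_add_single
  exact ⟨b, hb, hbu, hdeg⟩

/-- For a complete intersection, `s` is the support of a non-pure generator `x^a`. -/
theorem stmt_7_general {A : Set (σ →₀ ℕ)} {a : σ →₀ ℕ} {s : Finset σ} (hs : s.Nontrivial)
    (hA : ∀ b ∈ A, b ≠ a → Disjoint s b.support) (k : ℕ) :
    (Ideal.span ((monomial · (1 : R)) '' A) * idealOfVars σ R ^ (k + 1)).colon (idealOfVars σ R) =
      Ideal.span ((monomial · (1 : R)) '' A) * idealOfVars σ R ^ k := by
  apply le_antisymm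
  · calc _ ≤ (Ideal.span ((monomial · (1 : R)) '' A) * idealOfVars σ R ^ (k + 1)).colon (X '' s) :=
          Submodule.colon_mono le_rfl ((Set.image_subset_range X _).trans Ideal.subset_span)
      _ ≤ _ := colon_X_image_le_of_disjoint_support hs hA k
  · rw [pow_succ, ← mul_assoc]
    exact le_colon_mul _ _

end MvPolynomial

/-- Let `I = (x^a : a ∈ A)` be a monomial complete intersection (pairwise disjoint
supports) whose supports cover `{1,…,n}`, with some generator not a pure power.
Then `(I𝔪^{k+1} : 𝔪) = I𝔪^k` for every `k ≥ 0`. -/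
theorem stmt_7 (K : Type*) [Field K] (n : ℕ) (A : Finset (Fin n →₀ ℕ))
    (hAne : A.Nonempty)
    (hdisj : ∀ a ∈ A, ∀ b ∈ A, a ≠ b → Disjoint a.support b.support)
    (hcover : ∀ i : Fin n, ∃ a ∈ A, 0 < a i)
    (hnonpure : ∃ a ∈ A, 2 ≤ a.support.card)
    (m I : Ideal (MvPolynomial (Fin n) K))
    (hm : m = Ideal.span (Set.range (MvPolynomial.X : Fin n → MvPolynomial (Fin n) K)))
    (hI : I = Ideal.span ((fun a : Fin n →₀ ℕ => MvPolynomial.monomial a (1 : K)) '' A))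
    (k : ℕ) :
    (I * m ^ (k + 1)).colon m = I * m ^ k := by
  subst hm hI
  obtain ⟨a, ha, hcard⟩ := hnonpure
  exact stmt_7_general (Finset.one_lt_card_iff_nontrivial.1 hcard)
    (fun b hb hba => (hdisj b hb a ha hba).symm) k
end

section
/- Let (R, 𝔪) be a commutative Noetherian local ring. Suppose there exists x₀ ∈ 𝔪 such that for every integer i ≥ 0 and every f ∈ 𝔪^i, if x₀·f ∈ 𝔪^{i+2} then f ∈ 𝔪^{i+1} (equivalently, the initial form of x₀ is a degree-one nonzerodivisor on the associated graded ring gr_𝔪(R) = ⊕_{k≥0} 𝔪^k/𝔪^{k+1}). Then for every ideal I ⊆ R and every integer k ≥ 0, one has (I𝔪^{k+1} : 𝔪) ⊆ 𝔪^{k}. -/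
theorem mem_of_smul_mem_succ_of_antitone {R M : Type*} [Semiring R] [AddCommMonoid M] [Module R M]
    {F : ℕ → Submodule R M} (hF : Antitone F) (hF₀ : F 0 = ⊤) {x : R}
    (hx : ∀ i, ∀ m ∈ F i, x • m ∈ F (i + 2) → m ∈ F (i + 1))
    {k : ℕ} {m : M} (hm : x • m ∈ F (k + 1)) : m ∈ F k := by
  induction k with
  | zero => exact hF₀ ▸ Submodule.mem_top
  | succ k ih => exact hx k m (ih (hF (Nat.le_succ (k + 1)) hm)) hm

section CommSemiring

variable {R : Type*} [CommSemiring R] {𝔞 : Ideal R} {x : R}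

theorem pow_succ_colon_singleton_le_pow
    (hx : ∀ i, ∀ f ∈ 𝔞 ^ i, x * f ∈ 𝔞 ^ (i + 2) → f ∈ 𝔞 ^ (i + 1)) (k : ℕ) :
    (𝔞 ^ (k + 1)).colon {x} ≤ 𝔞 ^ k := by
  intro f hf
  have hxf : x * f ∈ 𝔞 ^ (k + 1) := by
    simpa only [Submodule.mem_colon_singleton, smul_eq_mul, mul_comm] using hf
  exact mem_of_smul_mem_succ_of_antitone (F := (𝔞 ^ ·))
    (fun _ _ hij ↦ Ideal.pow_le_pow_right hij) ((pow_zero 𝔞).trans Ideal.one_eq_top) hx hxf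

theorem stmt_9_general (hx_mem : x ∈ 𝔞)
    (hx : ∀ i, ∀ f ∈ 𝔞 ^ i, x * f ∈ 𝔞 ^ (i + 2) → f ∈ 𝔞 ^ (i + 1)) (I : Ideal R) (k : ℕ) :
    (I * 𝔞 ^ (k + 1)).colon 𝔞 ≤ 𝔞 ^ k :=
  calc (I * 𝔞 ^ (k + 1)).colon 𝔞
      ≤ (𝔞 ^ (k + 1)).colon {x} :=
        Submodule.colon_mono Ideal.mul_le_right (Set.singleton_subset_iff.mpr hx_mem)
    _ ≤ 𝔞 ^ k := pow_succ_colon_singleton_le_pow hx k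

end CommSemiring

/-- Let `(R, 𝔪)` be a Noetherian local ring. If some `x₀ ∈ 𝔪` has the property that
for all `i ≥ 0` and `f ∈ 𝔪^i`, `x₀·f ∈ 𝔪^{i+2}` implies `f ∈ 𝔪^{i+1}` (i.e. the
initial form of `x₀` is a degree-one nonzerodivisor on `gr_𝔪(R)`), then for every
ideal `I ⊆ R` and every `k ≥ 0` one has `(I𝔪^{k+1} : 𝔪) ⊆ 𝔪^k`. -/
theorem stmt_9 (R : Type*) [CommRing R] [IsNoetherianRing R] [IsLocalRing R]
    (x₀ : R) (hx₀ : x₀ ∈ IsLocalRing.maximalIdeal R)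
    (hreg : ∀ i : ℕ, ∀ f ∈ (IsLocalRing.maximalIdeal R) ^ i,
      x₀ * f ∈ (IsLocalRing.maximalIdeal R) ^ (i + 2) →
        f ∈ (IsLocalRing.maximalIdeal R) ^ (i + 1))
    (I : Ideal R) (k : ℕ) :
    (I * (IsLocalRing.maximalIdeal R) ^ (k + 1)).colon (IsLocalRing.maximalIdeal R) ≤
      (IsLocalRing.maximalIdeal R) ^ k :=
  stmt_9_general hx₀ hreg I k
end
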